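/- If L ⊂ Z^s is a homogeneous lattice and α_1,…,α_{s−1} is a Z-basis of L, then deg S/I(L) = (s−1)!·vol(conv(0, α_1, …, α_{s−1})), where vol denotes the relative volume of the (s−1)-simplex conv(0, α_1, …, α_{s−1}) in R^s. -/

import Mathlib

open MvPolynomial

/-- The binomial `t^{a⁺} - t^{a⁻}` associated to an integer vector `a ∈ ℤ^s`,
where `a⁺` and `a⁻` are the positive and negative parts of `a`. -/
noncomputable def latticeBinomial (K : Type*) [Field K] {s : ℕ} (a : Fin s → ℤ) :
    MvPolynomial (Fin s) K :=
  (∏ i, X i ^ (a i).toNat) - ∏ i, X i ^ (-(a i)).toNat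

/-- The lattice ideal `I(L) = ({t^{a⁺} - t^{a⁻} : a ∈ L})` of a lattice `L ⊆ ℤ^s`. -/
noncomputable def latticeIdeal (K : Type*) [Field K] {s : ℕ} (L : AddSubgroup (Fin s → ℤ)) :
    Ideal (MvPolynomial (Fin s) K) :=
  Ideal.span {f | ∃ a ∈ L, f = latticeBinomial K a}

/-- The Hilbert function `H_I(d) = dim_K S_d / I_d` of `S/I`, where `S_d` is the space of
homogeneous polynomials of degree `d` (together with `0`) and `I_d = I ∩ S_d`. -/
noncomputable def hilbertFunction {K : Type*} [Field K] {s : ℕ}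
    (I : Ideal (MvPolynomial (Fin s) K)) (d : ℕ) : ℕ :=
  Module.finrank K
    (↥(homogeneousSubmodule (Fin s) K d) ⧸
      (Submodule.comap (homogeneousSubmodule (Fin s) K d).subtype (Submodule.restrictScalars K I)))

lemma latticeBinomial_eq (K : Type*) [Field K] {s : ℕ} (a : Fin s → ℤ) :
    latticeBinomial K a =
      monomial (Finsupp.equivFunOnFinite.symm fun i => (a i).toNat) 1 -
      monomial (Finsupp.equivFunOnFinite.symm fun i => (-(a i)).toNat) 1 := by
  unfold latticeBinomial
  rw [monomial_eq, monomial_eq, Finsupp.prod_fintype _ _ (by simp),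
    Finsupp.prod_fintype _ _ (by simp)]
  simp

lemma monomial_sub_mem (K : Type*) [Field K] {s : ℕ} (L : AddSubgroup (Fin s → ℤ))
    (u v : Fin s →₀ ℕ) (h : (fun i => (u i : ℤ) - v i) ∈ L) :
    monomial u (1 : K) - monomial v 1 ∈ latticeIdeal K L := by
  have : monomial u (1 : K) - monomial v 1 =
      monomial (u ⊓ v) 1 * latticeBinomial K (fun i => (u i : ℤ) - v i) := by
    rw [latticeBinomial_eq, mul_sub, monomial_mul, monomial_mul, one_mul]
    congr 3
    · ext i
      simp
      omega
    · ext i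
      simp
      omega
  rw [this]
  exact Ideal.mul_mem_left _ _ (Ideal.subset_span ⟨_, h, rfl⟩)

/-- The class of an exponent vector, forgetting the last coordinate, modulo `N`. -/
noncomputable def expClass {n : ℕ} (N : Submodule ℤ (Fin n → ℤ)) :
    (Fin (n + 1) →₀ ℕ) →+ ((Fin n → ℤ) ⧸ N) where
  toFun u := N.mkQ (fun j => (u j.castSucc : ℤ))
  map_zero' := by
    rw [← map_zero N.mkQ]
    congr 1
  map_add' u v := by
    rw [← map_add]
    congr 1

/-- The dehomogenized monomial map `S → K[ℤ^n / N]`. -/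
noncomputable def classHom (K : Type*) [Field K] {n : ℕ} (N : Submodule ℤ (Fin n → ℤ)) :
    MvPolynomial (Fin (n + 1)) K →ₐ[K] AddMonoidAlgebra K ((Fin n → ℤ) ⧸ N) :=
  AddMonoidAlgebra.mapDomainAlgHom K K (expClass N)

lemma classHom_monomial (K : Type*) [Field K] {n : ℕ} (N : Submodule ℤ (Fin n → ℤ))
    (u : Fin (n + 1) →₀ ℕ) (c : K) :
    classHom K N (monomial u c) = AddMonoidAlgebra.single (expClass N u) c := by
  exact AddMonoidAlgebra.mapDomain_single

lemma latticeIdeal_le_ker (K : Type*) [Field K] {n : ℕ} (N : Submodule ℤ (Fin n → ℤ))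
    (L : AddSubgroup (Fin (n + 1) → ℤ)) (h : ∀ a ∈ L, (fun j : Fin n => a j.castSucc) ∈ N) :
    ∀ f ∈ latticeIdeal K L, classHom K N f = 0 := by
  suffices latticeIdeal K L ≤ RingHom.ker (classHom K N) from fun f hf => this hf
  unfold latticeIdeal
  rw [Ideal.span_le]
  rintro _ ⟨a, ha, rfl⟩
  simp only [SetLike.mem_coe, RingHom.mem_ker]
  rw [latticeBinomial_eq, map_sub, classHom_monomial, classHom_monomial, sub_eq_zero]
  congr 1
  change N.mkQ _ = N.mkQ _
  rw [← sub_eq_zero, ← map_sub, Submodule.mkQ_apply, Submodule.Quotient.mk_eq_zero]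
  convert h a ha using 1
  ext j
  simp
  

lemma mem_latticeIdeal_of_classHom (K : Type*) [Field K] {n : ℕ} (N : Submodule ℤ (Fin n → ℤ))
    (L : AddSubgroup (Fin (n + 1) → ℤ))
    (h : ∀ a : Fin (n + 1) → ℤ, ∑ i, a i = 0 → (fun j : Fin n => a j.castSucc) ∈ N → a ∈ L)
    (d : ℕ) (f : MvPolynomial (Fin (n + 1)) K) (hf : f.IsHomogeneous d)
    (h0 : classHom K N f = 0) : f ∈ latticeIdeal K L := by
  classical
  let r : ((Fin n → ℤ) ⧸ N) → (Fin (n + 1) →₀ ℕ) := fun g =>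
    if hg : ∃ u : Fin (n + 1) →₀ ℕ, u.degree = d ∧ expClass N u = g then hg.choose else 0
  have hr : ∀ u : Fin (n + 1) →₀ ℕ, u.degree = d →
      (r (expClass N u)).degree = d ∧ expClass N (r (expClass N u)) = expClass N u := by
    intro u hu
    have hg : ∃ v : Fin (n + 1) →₀ ℕ, v.degree = d ∧ expClass N v = expClass N u := ⟨u, hu, rfl⟩
    simp only [r, dif_pos hg]
    exact hg.choose_spec
  let ψ : AddMonoidAlgebra K ((Fin n → ℤ) ⧸ N) →+ MvPolynomial (Fin (n + 1)) K :=
    (Finsupp.liftAddHom (fun g => (monomial (R := K) (r g)).toAddMonoidHom)).comp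
      (AddMonoidAlgebra.coeffAddEquiv (R := K) (M := ((Fin n → ℤ) ⧸ N))).toAddMonoidHom
  have hψ : ∀ g c, ψ (AddMonoidAlgebra.single g c) = monomial (r g) c := by
    intro g c
    simp [ψ]
  have key : f - ψ (classHom K N f) ∈ latticeIdeal K L := by
    have : f - ψ (classHom K N f) = ∑ u ∈ f.support,
        C (coeff u f) * (monomial u 1 - monomial (r (expClass N u)) 1) := by
      conv_lhs => rw [f.as_sum]
      rw [map_sum, map_sum, ← Finset.sum_sub_distrib]
      refine Finset.sum_congr rfl fun u hu => ?_
      rw [classHom_monomial, hψ, mul_sub, C_mul_monomial, C_mul_monomial, mul_one]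
    rw [this]
    refine Ideal.sum_mem _ fun u hu => Ideal.mul_mem_left _ _ (monomial_sub_mem K L _ _ ?_)
    have hd : u.degree = d := by
      rw [Finsupp.degree_eq_weight_one]
      exact hf (mem_support_iff.1 hu)
    obtain ⟨h1, h2⟩ := hr u hd
    apply h
    · rw [Finset.sum_sub_distrib, sub_eq_zero]
      rw [Finsupp.degree_eq_sum] at h1 hd
      exact_mod_cast hd.trans h1.symm
    · have h3 : N.mkQ _ = N.mkQ _ := h2.symm
      rw [← sub_eq_zero, ← map_sub, Submodule.mkQ_apply, Submodule.Quotient.mk_eq_zero] at h3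
      exact h3
  rw [h0, map_zero, sub_zero] at key
  exact key

lemma exists_rep {n : ℕ} (N : Submodule ℤ (Fin n → ℤ)) (m : ℕ) (hm : 0 < m)
    (hN : ∀ w : Fin n → ℤ, (m : ℤ) • w ∈ N) (d : ℕ) (hd : n * m ≤ d)
    (g : (Fin n → ℤ) ⧸ N) : ∃ u : Fin (n + 1) →₀ ℕ, u.degree = d ∧ expClass N u = g := by
  obtain ⟨w, rfl⟩ := N.mkQ_surjective g
  have hm' : (0 : ℤ) < m := by exact_mod_cast hm
  let x : Fin n → ℕ := fun j => (w j % m).toNat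
  have hx : ∀ j, (x j : ℤ) = w j % m := fun j =>
    Int.toNat_of_nonneg (Int.emod_nonneg _ hm'.ne')
  have hsum : ∑ j, x j ≤ d := by
    refine le_trans ?_ hd
    calc ∑ j, x j ≤ ∑ _j : Fin n, m := Finset.sum_le_sum fun j _ => by
          have := Int.emod_lt_of_pos (w j) hm'
          have := hx j
          omega
      _ = n * m := by simp
  refine ⟨Finsupp.equivFunOnFinite.symm (Fin.snoc x (d - ∑ j, x j) : Fin (n + 1) → ℕ), ?_, ?_⟩
  · rw [Finsupp.degree_eq_sum, Fin.sum_univ_castSucc]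
    simp
    omega
  · change N.mkQ _ = N.mkQ _
    rw [← sub_eq_zero, ← map_sub, Submodule.mkQ_apply, Submodule.Quotient.mk_eq_zero]
    convert hN (fun j => -(w j / m)) using 1
    ext j
    have := Int.emod_add_mul_ediv (w j) m
    simp [hx]
    linarith

lemma hilbert_eq_card (K : Type*) [Field K] {n : ℕ} (N : Submodule ℤ (Fin n → ℤ))
    [Finite ((Fin n → ℤ) ⧸ N)]
    (L : AddSubgroup (Fin (n + 1) → ℤ))
    (h1 : ∀ a ∈ L, (fun j : Fin n => a j.castSucc) ∈ N)
    (h2 : ∀ a : Fin (n + 1) → ℤ, ∑ i, a i = 0 → (fun j : Fin n => a j.castSucc) ∈ N → a ∈ L)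
    (d : ℕ) (hrep : ∀ g : (Fin n → ℤ) ⧸ N,
      ∃ u : Fin (n + 1) →₀ ℕ, u.degree = d ∧ expClass N u = g) :
    hilbertFunction (latticeIdeal K L) d = Nat.card ((Fin n → ℤ) ⧸ N) := by
  have := Fintype.ofFinite ((Fin n → ℤ) ⧸ N)
  let F : ↥(homogeneousSubmodule (Fin (n + 1)) K d) →ₗ[K] AddMonoidAlgebra K ((Fin n → ℤ) ⧸ N) :=
    (classHom K N).toLinearMap ∘ₗ (homogeneousSubmodule (Fin (n + 1)) K d).subtype
  have hker : Submodule.comap (homogeneousSubmodule (Fin (n + 1)) K d).subtype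
      (Submodule.restrictScalars K (latticeIdeal K L)) = LinearMap.ker F := by
    ext ⟨f, hf⟩
    simp only [Submodule.mem_comap, Submodule.subtype_apply, Submodule.restrictScalars_mem,
      LinearMap.mem_ker]
    exact ⟨fun h => latticeIdeal_le_ker K N L h1 f h,
      fun h => mem_latticeIdeal_of_classHom K N L h2 d f hf h⟩
  have hsurj : Function.Surjective F := by
    intro x
    induction x using AddMonoidAlgebra.induction_linear with
    | zero => exact ⟨0, map_zero F⟩
    | add x y hx hy =>
      obtain ⟨a, rfl⟩ := hx
      obtain ⟨b, rfl⟩ := hy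
      exact ⟨a + b, map_add F a b⟩
    | single g c =>
      obtain ⟨u, hu, rfl⟩ := hrep g
      exact ⟨⟨monomial u c, isHomogeneous_monomial c hu⟩, classHom_monomial K N u c⟩
  unfold hilbertFunction
  rw [hker, (F.quotKerEquivOfSurjective hsurj).finrank_eq,
    (AddMonoidAlgebra.coeffLinearEquiv K).finrank_eq, Module.finrank_finsupp_self,
    Nat.card_eq_fintype_card]

lemma degree_aux (K : Type*) [Field K] {n : ℕ}
    (L : AddSubgroup (Fin (n + 1) → ℤ))
    (hhom : ∀ a ∈ L, ∑ i, a i = 0)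
    (α : Fin n → (Fin (n + 1) → ℤ))
    (hgen : L = AddSubgroup.closure (Set.range α))
    (hli : LinearIndependent ℤ α) :
    ∃ N : ℕ, ∀ d ≥ N, hilbertFunction (latticeIdeal K L) d =
      (Matrix.det (Matrix.of fun i j : Fin n => α i j.castSucc)).natAbs := by
  let π : (Fin (n + 1) → ℤ) →ₗ[ℤ] (Fin n → ℤ) := LinearMap.funLeft ℤ ℤ Fin.castSucc
  let P := Submodule.span ℤ (Set.range α)
  have hLP : ∀ a, a ∈ L ↔ a ∈ P := by
    intro a
    rw [hgen, ← Submodule.span_int_eq_addSubgroupClosure]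
    rfl
  have hinj : ∀ a, ∑ i, a i = 0 → π a = 0 → a = 0 := by
    intro a ha h
    have h' : ∀ j : Fin n, a j.castSucc = 0 := fun j => congrFun h j
    rw [Fin.sum_univ_castSucc] at ha
    ext i
    refine Fin.lastCases ?_ (fun j => h' j) i
    simpa [h'] using ha
  have hβ : LinearIndependent ℤ (π ∘ α) := by
    refine hli.map ?_
    rw [Submodule.disjoint_def]
    intro a ha h
    exact hinj a (hhom a ((hLP a).2 ha)) h
  let N := Submodule.span ℤ (Set.range (π ∘ α))
  have hN : N = P.map π := by
    simp only [N, P]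
    rw [Submodule.map_span, Set.range_comp]
  have h1 : ∀ a ∈ L, (fun j : Fin n => a j.castSucc) ∈ N := by
    intro a ha
    rw [hN]
    exact ⟨a, (hLP a).1 ha, rfl⟩
  have h2 : ∀ a : Fin (n + 1) → ℤ, ∑ i, a i = 0 → (fun j : Fin n => a j.castSucc) ∈ N → a ∈ L := by
    intro a ha h
    rw [hN] at h
    obtain ⟨b, hb, hab⟩ := h
    have hbL := (hLP b).2 hb
    have : a - b = 0 := hinj _ (by simp [ha, hhom b hbL]) (by
      rw [map_sub, hab, sub_eq_zero]
      rfl)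
    rw [sub_eq_zero.1 this]
    exact hbL
  let bN : Module.Basis (Fin n) ℤ N := Module.Basis.span hβ
  have hdet : (Matrix.det (Matrix.of fun i j : Fin n => α i j.castSucc)).natAbs =
      Nat.card ((Fin n → ℤ) ⧸ N) := by
    rw [← Submodule.natAbs_det_basis_change (Pi.basisFun ℤ (Fin n)) N bN,
      Module.Basis.det_apply, ← Matrix.det_transpose]
    congr 2
    ext i j
    have hb : ((bN j : N) : Fin n → ℤ) = π (α j) := Module.Basis.coe_span_apply hβ j
    simp [Module.Basis.toMatrix_apply, hb]
    rfl
  have hidx : N.toAddSubgroup.index ≠ 0 :=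
    Int.submodule_toAddSubgroup_index_ne_zero_iff.2 ⟨bN.equivFun⟩
  have hfin : Finite ((Fin n → ℤ) ⧸ N) := Nat.finite_of_card_ne_zero hidx
  refine ⟨n * N.toAddSubgroup.index, fun d hd => ?_⟩
  rw [hdet]
  refine hilbert_eq_card K N L h1 h2 d (exists_rep N _ (Nat.pos_of_ne_zero hidx) ?_ d hd)
  intro w
  rw [natCast_zsmul]
  exact N.toAddSubgroup.nsmul_index_mem w

/-- Theorem: if `L ⊆ ℤ^s` is a homogeneous lattice and `α_1, …, α_{s-1}` is a `ℤ`-basis of `L`,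
then `deg S/I(L) = (s-1)! · vol(conv(0, α_1, …, α_{s-1}))`, the normalized relative volume of
the simplex `conv(0, α_1, …, α_{s-1})`.  Since each `α_i` lies in the hyperplane `∑ x_i = 0`,
this normalized relative volume is `|det M|`, where `M = (α_{i,j})_{1 ≤ i,j ≤ s-1}` is the
matrix expressing the `α_i` in the basis `e_1 - e_s, …, e_{s-1} - e_s`. -/
theorem degree_latticeIdeal_eq_normalized_relative_volume
    (K : Type*) [Field K] {s : ℕ} (hs : 0 < s)
    (L : AddSubgroup (Fin s → ℤ))
    (hhom : ∀ a ∈ L, ∑ i, a i = 0)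
    (α : Fin (s - 1) → (Fin s → ℤ))
    (hgen : L = AddSubgroup.closure (Set.range α))
    (hli : LinearIndependent ℤ α) :
    ∃ N : ℕ, ∀ d ≥ N, hilbertFunction (latticeIdeal K L) d =
      (Matrix.det (Matrix.of fun i j : Fin (s - 1) =>
        α i (Fin.castLE (Nat.sub_le s 1) j))).natAbs := by
  obtain ⟨n, rfl⟩ : ∃ n, s = n + 1 := ⟨s - 1, by omega⟩
  exact degree_aux K L hhom α hgen hli
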